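/- Let L be a finite simplicial complex whose underlying space (the union of its faces) is homeomorphic to the 2-sphere. Then the 1-skeleton of L contains no complete bipartite graph K₃,₃: there do not exist six distinct vertices a₁, a₂, a₃, b₁, b₂, b₃ of L such that {aᵢ, bⱼ} is an edge (1-simplex) of L for every i, j ∈ {1,2,3}. -/

import Mathlib

open Geometry

/-- The ambient space for our simplicial complexes. -/
abbrev E3 : Type := EuclideanSpace ℝ (Fin 3)

noncomputable instance : DecidableEq E3 := Classical.decEq _

/-- Continuous logarithm on a contractible domain. -/
lemma exists_clog {A : Type*} [TopologicalSpace A] [SimplyConnectedSpace A]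
    [LocallyPathConnectedSpace A] (f : A → ℂ) (hf : Continuous f) (h0 : ∀ x, f x ≠ 0) :
    ∃ g : A → ℂ, Continuous g ∧ ∀ x, Complex.exp (g x) = f x := by
  obtain ⟨x₀⟩ : Nonempty A := inferInstance
  rcases Complex.isCoveringMapOn_exp.existsUnique_continuousMap_lifts
    ⟨f, hf⟩ (a₀ := x₀) (Complex.exp_log (h0 x₀)) (fun x => h0 x) with ⟨g, ⟨-, hg⟩, -⟩
  exact ⟨g, g.continuous, fun x => congrFun hg x⟩

/-- Two continuous logarithms of the same path have the same increments. -/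
lemma clog_incr (g g' : ℝ → ℂ) (hg : Continuous g) (hg' : Continuous g')
    (h : ∀ x, Complex.exp (g x) = Complex.exp (g' x)) (x y : ℝ) :
    g x - g y = g' x - g' y := by
  have key : g = fun t => g' t + (g y - g' y) := by
    refine Complex.isCoveringMap_exp.eq_of_comp_eq (A := ℝ) hg (by fun_prop) ?_ y (by simp)
    funext t
    apply Subtype.ext
    simp [Complex.exp_add, Complex.exp_sub, h]
  have := congrFun key x

  rw [this]; ring

/-- The planar part: `K₃,₃` cannot be drawn in the plane such that independent edges are
disjoint. -/
lemma planar_K33 (γ : Fin 3 → Fin 3 → ℝ → ℂ) (A B : Fin 3 → ℂ)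
    (hc : ∀ i j, Continuous (γ i j)) (h0 : ∀ i j, γ i j 0 = A i) (h1 : ∀ i j, γ i j 1 = B j)
    (hd : ∀ i j k l, i ≠ k → j ≠ l → ∀ s t, γ i j s ≠ γ k l t) : False := by
  have ex : ∀ i : Fin 3, ∃ k, i ≠ k := by decide
  have hAA : ∀ i k, i ≠ k → A i - A k ≠ 0 := by
    intro i k hik
    rw [← h0 i 0, ← h0 k 1]
    exact sub_ne_zero.2 (hd i 0 k 1 hik (by decide) 0 0)
  have hBB : ∀ i k, i ≠ k → B i - B k ≠ 0 := by
    intro i k hik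
    rw [← h1 0 i, ← h1 1 k]
    exact sub_ne_zero.2 (hd 0 i 1 k (by decide) hik 1 1)
  -- logarithms of differences of vertices
  have sgn : ∀ C : Fin 3 → ℂ, (∀ i k, i ≠ k → C i - C k ≠ 0) → ∃ α : Fin 3 → Fin 3 → ℂ,
      (∀ i k, i ≠ k → Complex.exp (α i k) = C i - C k) ∧
      (∀ i k, i < k → α k i = α i k + Real.pi * Complex.I) := by
    intro C hC
    refine ⟨fun i k => if i < k then Complex.log (C i - C k)
      else Complex.log (C k - C i) + Real.pi * Complex.I, ?_, ?_⟩
    · intro i k hik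
      by_cases h : i < k
      · simp only [h, if_true]; exact Complex.exp_log (hC i k hik)
      · simp only [h, if_false]
        rw [Complex.exp_add, Complex.exp_log (hC k i hik.symm), Complex.exp_pi_mul_I]; ring
    · intro i k hik
      simp [hik, not_lt.2 hik.le]
  obtain ⟨AA, hAA1, hAA2⟩ := sgn A hAA
  obtain ⟨BB, hBB1, hBB2⟩ := sgn B hBB
  have hAB : ∀ i j, A i - B j ≠ 0 := by
    intro i j
    obtain ⟨k, hk⟩ := ex i
    obtain ⟨l, hl⟩ := ex j
    rw [← h0 i l, ← h1 k j]
    exact sub_ne_zero.2 (hd i l k j hk hl.symm 0 1)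
  obtain ⟨AB, hAB1⟩ : ∃ AB : Fin 3 → Fin 3 → ℂ, ∀ i j, Complex.exp (AB i j) = A i - B j :=
    ⟨fun i j => Complex.log (A i - B j), fun i j => Complex.exp_log (hAB i j)⟩
  -- increments along edges
  have hDA : ∀ i j k, i ≠ k → ∃ n : ℤ, ∀ g : ℝ → ℂ, Continuous g →
      (∀ s, Complex.exp (g s) = γ i j s - A k) →
      g 1 - g 0 = AB k j + Real.pi * Complex.I - AA i k + n * (2 * Real.pi * Complex.I) := by
    intro i j k hik
    obtain ⟨l, hl⟩ := ex j
    obtain ⟨g', hg'c, hg'⟩ := exists_clog (fun s : ℝ => γ i j s - A k)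
      ((hc i j).sub continuous_const)
      (fun s => by rw [← h0 k l]; exact sub_ne_zero.2 (hd i j k l hik hl s 0))
    have e : Complex.exp (g' 1 - g' 0) =
        Complex.exp (AB k j + Real.pi * Complex.I - AA i k) := by
      rw [Complex.exp_sub, hg', hg', Complex.exp_sub, Complex.exp_add, hAB1, hAA1 i k hik,
        Complex.exp_pi_mul_I, h0, h1]
      ring
    obtain ⟨n, hn⟩ := Complex.exp_eq_exp_iff_exists_int.1 e
    refine ⟨n, fun g hgc hg => ?_⟩
    rw [← hn]
    exact clog_incr g g' hgc hg'c (fun x => by rw [hg, hg']) 1 0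
  have hDB : ∀ i j l, j ≠ l → ∃ n : ℤ, ∀ g : ℝ → ℂ, Continuous g →
      (∀ s, Complex.exp (g s) = γ i j s - B l) →
      g 1 - g 0 = BB j l - AB i l + n * (2 * Real.pi * Complex.I) := by
    intro i j l hjl
    obtain ⟨k, hk⟩ := ex i
    obtain ⟨g', hg'c, hg'⟩ := exists_clog (fun s : ℝ => γ i j s - B l)
      ((hc i j).sub continuous_const)
      (fun s => by rw [← h1 k l]; exact sub_ne_zero.2 (hd i j k l hk hjl s 1))
    have e : Complex.exp (g' 1 - g' 0) = Complex.exp (BB j l - AB i l) := by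
      rw [Complex.exp_sub, hg', hg', Complex.exp_sub, hAB1, hBB1 j l hjl, h0, h1]
    obtain ⟨n, hn⟩ := Complex.exp_eq_exp_iff_exists_int.1 e
    refine ⟨n, fun g hgc hg => ?_⟩
    rw [← hn]
    exact clog_incr g g' hgc hg'c (fun x => by rw [hg, hg']) 1 0
  choose! n hn using hDA
  choose! m hm using hDB
  have sq : ∀ i j k l, i ≠ k → j ≠ l →
      AA k i - AA i k + BB l j - BB j l +
        ((n i j k + m k l j - n k l i - m i j l : ℤ) : ℂ) * (2 * Real.pi * Complex.I) = 0 := by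
    intro i j k l hik hjl
    obtain ⟨G, hGc, hG⟩ := exists_clog (fun p : ℝ × ℝ => γ i j p.1 - γ k l p.2)
      (((hc i j).comp continuous_fst).sub ((hc k l).comp continuous_snd))
      (fun p => sub_ne_zero.2 (hd i j k l hik hjl _ _))
    have e1 := hn i j k hik (fun s => G (s, 0)) (by fun_prop)
      (fun s => by rw [hG]; simp [h0])
    have e2 := hm i j l hjl (fun s => G (s, 1)) (by fun_prop)
      (fun s => by rw [hG]; simp [h1])
    have e3 := hn k l i hik.symm (fun t => G (0, t) + Real.pi * Complex.I) (by fun_prop)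
      (fun s => by rw [Complex.exp_add, hG, Complex.exp_pi_mul_I]; simp [h0])
    have e4 := hm k l j hjl.symm (fun t => G (1, t) + Real.pi * Complex.I) (by fun_prop)
      (fun s => by rw [Complex.exp_add, hG, Complex.exp_pi_mul_I]; simp [h1])
    push_cast
    linear_combination e2 + e3 - e1 - e4
  have h2pi : (2 * Real.pi * Complex.I : ℂ) ≠ 0 := Complex.two_pi_I_ne_zero
  have sqlt : ∀ i j k l, i < k → j < l → n i j k + m k l j - n k l i - m i j l = -1 := by
    intro i j k l hik hjl
    have := sq i j k l hik.ne hjl.ne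
    rw [hAA2 i k hik, hBB2 j l hjl] at this
    have h : ((n i j k + m k l j - n k l i - m i j l + 1 : ℤ) : ℂ) * (2 * Real.pi * Complex.I)
        = 0 := by
      push_cast at this ⊢
      linear_combination this
    have h' := (mul_eq_zero.1 h).resolve_right h2pi
    have h'' : n i j k + m k l j - n k l i - m i j l + 1 = 0 := by exact_mod_cast h'
    omega
  have sqgt : ∀ i j k l, i < k → l < j → n i j k + m k l j - n k l i - m i j l = 0 := by
    intro i j k l hik hjl
    have := sq i j k l hik.ne hjl.ne'
    rw [hAA2 i k hik, hBB2 l j hjl] at this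
    have h : ((n i j k + m k l j - n k l i - m i j l : ℤ) : ℂ) * (2 * Real.pi * Complex.I)
        = 0 := by
      push_cast at this ⊢
      linear_combination this
    have h' := (mul_eq_zero.1 h).resolve_right h2pi
    exact_mod_cast h'
  have q1 : ∀ i k, i < k → n i 0 k + m k 1 0 - n k 1 i - m i 0 1 = -1 :=
    fun i k h => sqlt i 0 k 1 h (by decide)
  have q2 : ∀ i k, i < k → n i 0 k + m k 2 0 - n k 2 i - m i 0 2 = -1 :=
    fun i k h => sqlt i 0 k 2 h (by decide)
  have q3 : ∀ i k, i < k → n i 1 k + m k 2 1 - n k 2 i - m i 1 2 = -1 :=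
    fun i k h => sqlt i 1 k 2 h (by decide)
  have r1 : ∀ i k, i < k → n i 1 k + m k 0 1 - n k 0 i - m i 1 0 = 0 :=
    fun i k h => sqgt i 1 k 0 h (by decide)
  have r2 : ∀ i k, i < k → n i 2 k + m k 0 2 - n k 0 i - m i 2 0 = 0 :=
    fun i k h => sqgt i 2 k 0 h (by decide)
  have r3 : ∀ i k, i < k → n i 2 k + m k 1 2 - n k 1 i - m i 2 1 = 0 :=
    fun i k h => sqgt i 2 k 1 h (by decide)
  have a01 : (0 : Fin 3) < 1 := by decide
  have a02 : (0 : Fin 3) < 2 := by decide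
  have a12 : (1 : Fin 3) < 2 := by decide
  have := q1 0 1 a01
  have := q1 0 2 a02
  have := q1 1 2 a12
  have := q2 0 1 a01
  have := q2 0 2 a02
  have := q2 1 2 a12
  have := q3 0 1 a01
  have := q3 0 2 a02
  have := q3 1 2 a12
  have := r1 0 1 a01
  have := r1 0 2 a02
  have := r1 1 2 a12
  have := r2 0 1 a01
  have := r2 0 2 a02
  have := r2 1 2 a12
  have := r3 0 1 a01
  have := r3 0 2 a02
  have := r3 1 2 a12
  omega

/-- The 2-sphere stays connected after removal of two points. -/
lemma sphere_compl_pair (p q : Metric.sphere (0 : E3) 1) :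
    IsPreconnected ({p, q}ᶜ : Set (Metric.sphere (0 : E3) 1)) := by
  have : Fact (Module.finrank ℝ E3 = 2 + 1) := ⟨by simp⟩
  let σ := stereographic' (E := E3) 2 p
  have hrank : 1 < Module.rank ℝ (EuclideanSpace ℝ (Fin 2)) := by
    exact Module.lt_rank_of_lt_finrank (by simp)
  have hc : IsConnected ({σ q}ᶜ : Set (EuclideanSpace ℝ (Fin 2))) :=
    isConnected_compl_singleton_of_one_lt_rank hrank _
  have himg := hc.isPreconnected.image σ.symm (σ.continuousOn_symm.mono (by simp [σ]))
  by_cases hpq : q = p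
  · subst hpq
    have h2 := (isPreconnected_univ (α := EuclideanSpace ℝ (Fin 2))).image σ.symm
      (σ.continuousOn_symm.mono (by simp [σ]))
    have : σ.symm '' Set.univ = σ.source := by
      have := σ.symm.image_source_eq_target
      simpa [σ] using this
    rw [this] at h2
    simpa [σ] using h2
  · convert himg using 1
    ext x
    simp only [Set.mem_compl_iff, Set.mem_insert_iff, Set.mem_singleton_iff, Set.mem_image, not_or]
    constructor
    · rintro ⟨hx1, hx2⟩
      refine ⟨σ x, fun h => hx2 (σ.injOn (by simpa [σ]) (by simpa [σ]) h),
        σ.left_inv (by simpa [σ])⟩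
    · rintro ⟨y, hy, rfl⟩
      have hy' : y ∈ σ.target := by simp [σ]
      have h1 := σ.map_target hy'
      refine ⟨by simpa [σ] using h1, fun h => hy ?_⟩
      rw [← h, σ.right_inv hy']

/-- If `L` is a finite simplicial complex whose underlying space is
homeomorphic to the 2-sphere, then the 1-skeleton of `L` contains no complete
bipartite graph `K₃,₃`: there are no six distinct vertices `a 0, a 1, a 2,
b 0, b 1, b 2` with every `{a i, b j}` an edge of `L`. -/
theorem no_K33_in_sphere_triangulation
    (L : SimplicialComplex ℝ E3) (hfin : L.faces.Finite)
    (hsphere : Nonempty (L.space ≃ₜ (Metric.sphere (0 : E3) 1 : Set E3))) :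
    ¬ ∃ a b : Fin 3 → E3, Function.Injective a ∧ Function.Injective b ∧
      (∀ i j : Fin 3, a i ≠ b j) ∧
      (∀ i j : Fin 3, ({a i, b j} : Finset E3) ∈ L.faces) := by
  rintro ⟨a, b, ha, hb, hab, hL⟩
  obtain ⟨h⟩ := hsphere
  have hsub : ∀ i j, segment ℝ (a i) (b j) ⊆ L.space := by
    intro i j
    have := L.convexHull_subset_space (hL i j)
    rwa [Finset.coe_insert, Finset.coe_singleton, convexHull_pair] at this
  have hint : ∀ i j k l, segment ℝ (a i) (b j) ∩ segment ℝ (a k) (b l) ⊆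
      convexHull ℝ (({a i, b j} : Set E3) ∩ {a k, b l}) := by
    intro i j k l
    have := L.inter_subset_convexHull (hL i j) (hL k l)
    rwa [Finset.coe_insert, Finset.coe_singleton, Finset.coe_insert, Finset.coe_singleton,
      convexHull_pair, convexHull_pair] at this
  have hdis : ∀ i j k l, i ≠ k → j ≠ l → ∀ x ∈ segment ℝ (a i) (b j),
      x ∉ segment ℝ (a k) (b l) := by
    intro i j k l hik hjl x hx hx'
    have h1 := hint i j k l ⟨hx, hx'⟩
    have : ({a i, b j} : Set E3) ∩ {a k, b l} = ∅ := by
      ext y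
      simp only [Set.mem_inter_iff, Set.mem_insert_iff, Set.mem_singleton_iff,
        Set.mem_empty_iff_false, iff_false]
      rintro ⟨rfl | rfl, h | h⟩
      · exact hik (ha h)
      · exact hab _ _ h
      · exact hab _ _ h.symm
      · exact hjl (hb h)
    rw [this] at h1
    simp at h1
  -- segments as closed subsets of the space
  let S : Fin 3 → Fin 3 → Set L.space := fun i j => Subtype.val ⁻¹' segment ℝ (a i) (b j)
  have hSclosed : ∀ i j, IsClosed (S i j) := by
    intro i j
    refine IsClosed.preimage continuous_subtype_val ?_
    rw [← convexHull_pair]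
    exact (Set.Finite.isCompact_convexHull ℝ (Set.toFinite _)).isClosed
  -- some point is not covered
  obtain ⟨v, hv⟩ : ∃ v : L.space, ∀ i j, v ∉ S i j := by
    by_contra! hcov
    let a0 : L.space := ⟨a 0, hsub 0 0 (left_mem_segment ℝ _ _)⟩
    let b0 : L.space := ⟨b 0, hsub 0 0 (right_mem_segment ℝ _ _)⟩
    have hpre : IsPreconnected ({a0, b0}ᶜ : Set L.space) := by
      have := (sphere_compl_pair (h a0) (h b0)).preimage_of_isOpenMap h.injective h.isOpenMap
        (by intro x _; exact h.surjective x)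
      convert this using 1
      ext x
      simp
    let K : Set L.space := ⋃ p : {p : Fin 3 × Fin 3 // p ≠ (0, 0)}, S p.1.1 p.1.2
    have hK : IsClosed K := isClosed_iUnion_of_finite (fun p => hSclosed _ _)
    have hcover : ({a0, b0}ᶜ : Set L.space) ⊆ S 0 0 ∪ K := by
      intro x _
      obtain ⟨i, j, hx⟩ := hcov x
      by_cases hp : (i, j) = (0, 0)
      · left
        simp only [Prod.mk.injEq] at hp
        rw [hp.1, hp.2] at hx
        exact hx
      · right
        exact Set.mem_iUnion.2 ⟨⟨(i, j), hp⟩, hx⟩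
    have hmid : midpoint ℝ (a 0) (b 0) ∈ segment ℝ (a 0) (b 0) := midpoint_mem_segment _ _
    have hne1 : (({a0, b0}ᶜ : Set L.space) ∩ S 0 0).Nonempty := by
      refine ⟨⟨midpoint ℝ (a 0) (b 0), hsub 0 0 hmid⟩, ?_, hmid⟩
      have h00 := hab 0 0
      simp only [a0, b0, Set.mem_compl_iff, Set.mem_insert_iff, Set.mem_singleton_iff,
        Subtype.mk.injEq, midpoint_eq_left_iff, midpoint_eq_right_iff, not_or]
      exact ⟨h00, h00⟩
    have hne2 : (({a0, b0}ᶜ : Set L.space) ∩ K).Nonempty := by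
      refine ⟨⟨a 1, hsub 1 0 (left_mem_segment ℝ _ _)⟩, ?_, ?_⟩
      · simp only [a0, b0, Set.mem_compl_iff, Set.mem_insert_iff, Set.mem_singleton_iff,
          Subtype.mk.injEq, not_or]
        exact ⟨fun e => absurd (ha e) (by decide), hab _ _⟩
      · exact Set.mem_iUnion.2 ⟨⟨(1, 0), by decide⟩, left_mem_segment ℝ _ _⟩
    obtain ⟨x, hx, hx0, hxK⟩ := isPreconnected_closed_iff.1 hpre _ _ (hSclosed 0 0) hK hcover
      hne1 hne2
    obtain ⟨⟨⟨i, j⟩, hp⟩, hxp⟩ := Set.mem_iUnion.1 hxK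
    have hx1 := hint 0 0 i j ⟨hx0, hxp⟩
    have hsubs : (({a 0, b 0} : Set E3) ∩ {a i, b j}) ⊆ {a 0} ∨
        (({a 0, b 0} : Set E3) ∩ {a i, b j}) ⊆ {b 0} := by
      by_cases hi : i = 0
      · have hj : j ≠ 0 := fun hj => hp (by rw [hi, hj])
        left
        rintro y ⟨rfl | rfl, hy⟩
        · rfl
        · rcases hy with hy | hy
          · exact absurd hy.symm (hab _ _)
          · exact absurd (hb hy).symm hj
      · right
        rintro y ⟨rfl | rfl, hy⟩
        · rcases hy with hy | hy
          · exact absurd (ha hy).symm hi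
          · exact absurd hy (hab _ _)
        · rfl
    rcases hsubs with hs | hs
    · have := convexHull_mono (𝕜 := ℝ) hs hx1
      rw [convexHull_singleton] at this
      exact hx (Or.inl (Subtype.ext this))
    · have := convexHull_mono (𝕜 := ℝ) hs hx1
      rw [convexHull_singleton] at this
      exact hx (Or.inr (Subtype.ext this))
  -- transport to the plane
  have : Fact (Module.finrank ℝ E3 = 2 + 1) := ⟨by simp⟩
  let σ := stereographic' (E := E3) 2 (h v)
  let τ := Complex.orthonormalBasisOneI.repr.symm
  have hmem : ∀ i j (s : ℝ), AffineMap.lineMap (a i) (b j) (Set.projIcc (0 : ℝ) 1 zero_le_one s : ℝ)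
      ∈ segment ℝ (a i) (b j) := by
    intro i j s
    rw [segment_eq_image_lineMap]
    exact Set.mem_image_of_mem _ (Set.projIcc (0 : ℝ) 1 zero_le_one s).2
  let c : Fin 3 → Fin 3 → ℝ → L.space := fun i j s => ⟨_, hsub i j (hmem i j s)⟩
  have hcc : ∀ i j, Continuous (c i j) := by
    intro i j
    refine Continuous.subtype_mk ?_ _
    exact AffineMap.lineMap_continuous.comp (continuous_subtype_val.comp continuous_projIcc)
  have hsrc : ∀ i j s, h (c i j s) ∈ σ.source := by
    intro i j s
    simp only [σ, stereographic'_source, Set.mem_compl_iff, Set.mem_singleton_iff]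
    intro e
    have := h.injective e
    exact hv i j (this ▸ hmem i j s)
  have hc0 : ∀ i j k, c i j 0 = c i k 0 := by
    intro i j k
    apply Subtype.ext
    simp [c]
  have hc1 : ∀ i j k, c i j 1 = c k j 1 := by
    intro i j k
    apply Subtype.ext
    simp [c]
  refine planar_K33 (fun i j s => τ (σ (h (c i j s)))) (fun i => τ (σ (h (c i 0 0))))
    (fun j => τ (σ (h (c 0 j 1)))) ?_ ?_ ?_ ?_
  · intro i j
    exact τ.continuous.comp (σ.continuousOn.comp_continuous (h.continuous.comp (hcc i j))
      (hsrc i j))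
  · intro i j
    simp only [hc0 i j 0]
  · intro i j
    simp only [hc1 i j 0]
  · intro i j k l hik hjl s t e
    have e1 := σ.injOn (hsrc i j s) (hsrc k l t) (τ.injective e)
    have e2 := congrArg Subtype.val (h.injective e1)
    have m1 := hmem i j s
    have m2 := hmem k l t
    exact hdis i j k l hik hjl _ m1 ((show AffineMap.lineMap (a i) (b j) _ = _ from e2) ▸ m2)
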